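/- arXiv:math/0604588 — 3 statements merged into one kernel-verified Lean document; each statement's English description precedes it below -/
import Mathlib

section
/- For τ, σ with Im τ > 0 and Im σ > 0, the doubly indexed family (j,k) ∈ ℕ × ℕ ↦ (1 − e^{2πi((j+1)τ + (k+1)σ − z)}) is multipliable for every z ∈ ℂ, and the function z ↦ Γ(z,τ,σ) is holomorphic on the open set {z ∈ ℂ : jτ + kσ + z ∉ ℤ for all integers j,k ≥ 0}. -/
/-!
Put `D z = ∏' (j,k), (1 − e^{2πi(jτ + kσ + z)})`. Since `e^{2πi(jτ + kσ + z)} = q^j r^k e^{2πiz}` with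
`q = e^{2πiτ}` and `r = e^{2πiσ}` of modulus less than one, the terms are dominated, uniformly for `z`
in a ball, by a convergent double geometric series. Hence the product converges locally uniformly,
`D` is entire (`ellGammaDenom_differentiable`), and `D z` vanishes only if one of its factors does,
which is excluded when `z` is regular (`ellGammaDenom_ne_zero`).

The numerator product of the elliptic gamma function at `z` is `D (τ + σ - z)`, so
`Γ(z,τ,σ) = D (τ + σ - z) / D z` on the regular set, a quotient of entire functions with nonvanishing
denominator.
-/

open Complex

/-- The theta function `θ₀(z,τ) = ∏_{j=0}^∞ (1 − e^{2πi((j+1)τ − z)})(1 − e^{2πi(jτ + z)})`. -/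
noncomputable def theta0 (z τ : ℂ) : ℂ :=
  ∏' j : ℕ,
    (1 - Complex.exp (2 * Real.pi * Complex.I * ((j + 1) * τ - z))) *
      (1 - Complex.exp (2 * Real.pi * Complex.I * (j * τ + z)))

/-- The elliptic gamma function
`Γ(z,τ,σ) = ∏_{j,k=0}^∞ (1 − e^{2πi((j+1)τ + (k+1)σ − z)}) / (1 − e^{2πi(jτ + kσ + z)})`. -/
noncomputable def ellGamma (z τ σ : ℂ) : ℂ :=
  ∏' p : ℕ × ℕ,
    (1 - Complex.exp (2 * Real.pi * Complex.I * ((p.1 + 1) * τ + (p.2 + 1) * σ - z))) /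
      (1 - Complex.exp (2 * Real.pi * Complex.I * (p.1 * τ + p.2 * σ + z)))

/-- The condition that `jτ + kσ + z ∉ ℤ` for all natural numbers `j, k`. -/
def EllGammaRegular (z τ σ : ℂ) : Prop :=
  ∀ j k : ℕ, ∀ n : ℤ, (j : ℂ) * τ + (k : ℂ) * σ + z ≠ (n : ℂ)

/-- The product `∏_{j,k ≥ 0} (1 − e^{2πi(jτ + kσ + z)})`, the denominator of `Γ(z,τ,σ)`. -/
noncomputable def ellGammaDenom (τ σ z : ℂ) : ℂ :=
  ∏' p : ℕ × ℕ, (1 + -Complex.exp (2 * Real.pi * Complex.I * (p.1 * τ + p.2 * σ + z)))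

lemma norm_exp_two_pi_I_lt_one {τ : ℂ} (hτ : 0 < τ.im) :
    ‖Complex.exp (2 * Real.pi * Complex.I * τ)‖ < 1 := by
  rw [Complex.norm_exp, Real.exp_lt_one_iff]
  have : (2 * Real.pi * Complex.I * τ).re = -(2 * Real.pi * τ.im) := by simp
  rw [this]
  have := Real.pi_pos
  have : 0 < 2 * Real.pi * τ.im := by positivity
  linarith

lemma exp_lattice_eq (τ σ z : ℂ) (p : ℕ × ℕ) :
    Complex.exp (2 * Real.pi * Complex.I * (p.1 * τ + p.2 * σ + z)) =
      Complex.exp (2 * Real.pi * Complex.I * τ) ^ p.1 *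
        Complex.exp (2 * Real.pi * Complex.I * σ) ^ p.2 *
        Complex.exp (2 * Real.pi * Complex.I * z) := by
  rw [← Complex.exp_nat_mul, ← Complex.exp_nat_mul, ← Complex.exp_add, ← Complex.exp_add]
  congr 1
  ring

lemma summable_double_geometric {q r : ℂ} (hq : ‖q‖ < 1) (hr : ‖r‖ < 1) :
    Summable (fun p : ℕ × ℕ => ‖q‖ ^ p.1 * ‖r‖ ^ p.2) :=
  (summable_geometric_of_lt_one (norm_nonneg q) hq).mul_of_nonneg
    (summable_geometric_of_lt_one (norm_nonneg r) hr)
    (fun _ => by positivity) (fun _ => by positivity)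

lemma summable_norm_exp_lattice {τ σ : ℂ} (hτ : 0 < τ.im) (hσ : 0 < σ.im) (z : ℂ) :
    Summable (fun p : ℕ × ℕ =>
      ‖-Complex.exp (2 * Real.pi * Complex.I * (p.1 * τ + p.2 * σ + z))‖) := by
  simp only [exp_lattice_eq, norm_neg, norm_mul, norm_pow]
  exact (summable_double_geometric (norm_exp_two_pi_I_lt_one hτ)
    (norm_exp_two_pi_I_lt_one hσ)).mul_right _

lemma multipliable_ellGammaDenom {τ σ : ℂ} (hτ : 0 < τ.im) (hσ : 0 < σ.im) (z : ℂ) :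
    Multipliable (fun p : ℕ × ℕ =>
      1 + -Complex.exp (2 * Real.pi * Complex.I * (p.1 * τ + p.2 * σ + z))) :=
  multipliable_one_add_of_summable (summable_norm_exp_lattice hτ hσ z)

lemma ellGammaDenom_ne_zero {τ σ z : ℂ} (hτ : 0 < τ.im) (hσ : 0 < σ.im)
    (hz : EllGammaRegular z τ σ) : ellGammaDenom τ σ z ≠ 0 := by
  refine tprod_one_add_ne_zero_of_summable (fun p h => ?_) (summable_norm_exp_lattice hτ hσ z)
  rw [← sub_eq_add_neg, sub_eq_zero, eq_comm, Complex.exp_eq_one_iff] at h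
  obtain ⟨n, hn⟩ := h
  refine hz p.1 p.2 n (mul_left_cancel₀ Complex.two_pi_I_ne_zero ?_)
  rw [hn, mul_comm]

lemma ellGammaDenom_differentiable {τ σ : ℂ} (hτ : 0 < τ.im) (hσ : 0 < σ.im) :
    Differentiable ℂ (ellGammaDenom τ σ) := by
  intro z₀
  have hball : Metric.ball (0 : ℂ) (‖z₀‖ + 1) ∈ nhds z₀ :=
    Metric.isOpen_ball.mem_nhds (by simp)
  refine DifferentiableOn.differentiableAt (s := Metric.ball (0 : ℂ) (‖z₀‖ + 1)) ?_ hball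
  have hu := (summable_double_geometric (norm_exp_two_pi_I_lt_one hτ)
    (norm_exp_two_pi_I_lt_one hσ)).mul_right (Real.exp (2 * Real.pi * (‖z₀‖ + 1)))
  have hprod := Summable.hasProdLocallyUniformlyOn_one_add
    (f := fun (p : ℕ × ℕ) (z : ℂ) =>
      -Complex.exp (2 * Real.pi * Complex.I * (p.1 * τ + p.2 * σ + z)))
    (K := Metric.ball (0 : ℂ) (‖z₀‖ + 1)) Metric.isOpen_ball hu
    (Filter.Eventually.of_forall fun p z hz => by
      rw [exp_lattice_eq, norm_neg, norm_mul, norm_mul, norm_pow, norm_pow]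
      gcongr
      refine (Complex.norm_exp_le_exp_norm _).trans (Real.exp_le_exp.mpr ?_)
      have hz' : ‖z‖ ≤ ‖z₀‖ + 1 := by simpa using (Metric.mem_ball.mp hz).le
      have hn : ‖2 * (Real.pi : ℂ) * Complex.I * z‖ = 2 * Real.pi * ‖z‖ := by
        simp [abs_of_pos Real.pi_pos]
      rw [hn]
      have := Real.pi_pos
      gcongr)
    (fun p => by fun_prop)
  refine hprod.differentiableOn (Filter.Eventually.of_forall fun s => ?_) Metric.isOpen_ball
  fun_prop

/-- The numerator factors at `z` are the denominator factors at `τ + σ - z`. -/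
lemma ellGamma_numerator_factor (τ σ z : ℂ) (p : ℕ × ℕ) :
    1 - Complex.exp (2 * Real.pi * Complex.I * ((p.1 + 1) * τ + (p.2 + 1) * σ - z)) =
      1 + -Complex.exp (2 * Real.pi * Complex.I * (p.1 * τ + p.2 * σ + (τ + σ - z))) := by
  rw [sub_eq_add_neg]
  congr 4
  ring

lemma ellGamma_eq_div {τ σ z : ℂ} (hτ : 0 < τ.im) (hσ : 0 < σ.im)
    (hz : EllGammaRegular z τ σ) :
    ellGamma z τ σ = ellGammaDenom τ σ (τ + σ - z) / ellGammaDenom τ σ z := by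
  have hD := (multipliable_ellGammaDenom hτ hσ z).hasProd
  have hN := (multipliable_ellGammaDenom hτ hσ (τ + σ - z)).hasProd
  have h := hN.div₀ hD (ellGammaDenom_ne_zero hτ hσ hz)
  rw [ellGamma, ellGammaDenom, ellGammaDenom, ← h.tprod_eq]
  refine tprod_congr fun p => ?_
  rw [ellGamma_numerator_factor, sub_eq_add_neg 1]

/-- The numerator family defining the elliptic gamma function is multipliable, and
`z ↦ Γ(z,τ,σ)` is holomorphic on the set where no `jτ + kσ + z` is an integer. -/
theorem ellGamma_multipliable_and_holomorphic (τ σ : ℂ) (hτ : 0 < τ.im) (hσ : 0 < σ.im) :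
    (∀ z : ℂ, Multipliable (fun p : ℕ × ℕ =>
      1 - Complex.exp (2 * Real.pi * Complex.I * ((p.1 + 1) * τ + (p.2 + 1) * σ - z)))) ∧
    DifferentiableOn ℂ (fun z : ℂ => ellGamma z τ σ) {z : ℂ | EllGammaRegular z τ σ} := by
  refine ⟨fun z => ?_, ?_⟩
  · simp only [ellGamma_numerator_factor]
    exact multipliable_ellGammaDenom hτ hσ _
  · have hD := ellGammaDenom_differentiable hτ hσ
    have hN : Differentiable ℂ fun z => ellGammaDenom τ σ (τ + σ - z) :=
      hD.comp (differentiable_id.const_sub (τ + σ))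
    exact (hN.differentiableOn.div hD.differentiableOn
      fun z hz => ellGammaDenom_ne_zero hτ hσ hz).congr fun z hz => ellGamma_eq_div hτ hσ hz
end

section
/- Let a, b ∈ ℤ³ be primitive and linearly independent, with γ and c as in the definition of Γ_{a,b}. For every x ∈ U_a^+ ∩ U_b^+ with γ·x ≠ 0 and every w ∈ ℂ, the family indexed by {δ ∈ ℤ³ : δ·a > 0, δ·b ≤ 0, δ·c = 0} with terms (1 − e^{−2πi(δ·x − w)/(γ·x)}) and the family indexed by {δ ∈ ℤ³ : δ·b > 0, δ·a ≤ 0, δ·c = 0} with terms (1 − e^{2πi(δ·x − w)/(γ·x)}) are both multipliable, i.e. the infinite products defining Γ_{a,b}(w,x) converge. -/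
/-!
Write `x = p + i q` with `p, q ∈ ℝ³`. For real forms `α, β` one has
`Im (α(x) conj(β(x))) = (α × β) · (q × p)`, and `α × β` is a positive multiple of `u` for an oriented
pair annihilating `u`; hence `x ∈ U_u^+` forces `u · (q × p) > 0` (`imForm_pos_of_mem_Uplus`).

Set `A = a · (q × p) > 0` and `B = b · (q × p) > 0`. From `s γ = a × b` and
`δ × (a × b) = (δ·b) a - (δ·a) b` it follows that
`Im (δ·x / γ·x) = ((δ·b) A - (δ·a) B) / (s |γ·x|²)` (`im_dotC_div`). On each of the two index sets both
terms of the numerator have the same sign, so the exponentials are bounded by a constant times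
`exp (-k |δ·a|) exp (-l |δ·b|)` with `k, l > 0`. Since `det (a, b, c) = s ≠ 0`, the vector
`δ` with `δ·c = 0` is determined by `(δ·a, δ·b)`, so these bounds are dominated by a product of two
geometric series (`multipliable_of_exp_bound`), and absolute summability gives multipliability.
-/

open Complex

/-- Integer dot product on `ℤ³`. -/
def dotZ (u v : Fin 3 → ℤ) : ℤ := u 0 * v 0 + u 1 * v 1 + u 2 * v 2

/-- Pairing of an integer vector (viewed as a linear form) with a complex vector,
extended ℂ-bilinearly. -/
def dotC (u : Fin 3 → ℤ) (x : Fin 3 → ℂ) : ℂ :=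
  (u 0 : ℂ) * x 0 + (u 1 : ℂ) * x 1 + (u 2 : ℂ) * x 2

/-- Pairing of a real linear form (given by its coefficient vector) with a complex vector,
extended ℂ-linearly. -/
def dotRC (α : Fin 3 → ℝ) (x : Fin 3 → ℂ) : ℂ :=
  (α 0 : ℂ) * x 0 + (α 1 : ℂ) * x 1 + (α 2 : ℂ) * x 2

/-- Pairing of a real linear form with an integer vector. -/
def dotRZ (α : Fin 3 → ℝ) (u : Fin 3 → ℤ) : ℝ :=
  α 0 * (u 0 : ℝ) + α 1 * (u 1 : ℝ) + α 2 * (u 2 : ℝ)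

/-- Cross product on `ℤ³`. -/
def crossZ (a b : Fin 3 → ℤ) : Fin 3 → ℤ :=
  ![a 1 * b 2 - a 2 * b 1, a 2 * b 0 - a 0 * b 2, a 0 * b 1 - a 1 * b 0]

/-- A vector of `ℤ³` is primitive if the gcd of its coordinates is `1`. -/
def IsPrimitiveZ3 (a : Fin 3 → ℤ) : Prop := Int.gcd (a 0) (Int.gcd (a 1) (a 2)) = 1

/-- Determinant of three real linear forms on `ℝ³`. -/
def det3 (α β ε : Fin 3 → ℝ) : ℝ :=
  α 0 * (β 1 * ε 2 - β 2 * ε 1) - α 1 * (β 0 * ε 2 - β 2 * ε 0) +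
    α 2 * (β 0 * ε 1 - β 1 * ε 0)

/-- `(α, β)` is an oriented basis of the plane of real linear forms annihilating `u`:
both annihilate `u`, they are linearly independent, and `det(α,β,ε) > 0` for some
(equivalently, any) `ε` with `ε(u) > 0`. -/
def OrientedPair (u : Fin 3 → ℤ) (α β : Fin 3 → ℝ) : Prop :=
  dotRZ α u = 0 ∧ dotRZ β u = 0 ∧ LinearIndependent ℝ ![α, β] ∧
    ∃ ε : Fin 3 → ℝ, 0 < dotRZ ε u ∧ 0 < det3 α β ε

/-- The domain `U_u^+ = {x ∈ ℂ³ : Im(α(x)·conj(β(x))) > 0}` for an (equivalently, any)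
oriented basis `(α,β)` of the annihilator plane of `u`. -/
def Uplus (u : Fin 3 → ℤ) : Set (Fin 3 → ℂ) :=
  {x | ∃ α β : Fin 3 → ℝ, OrientedPair u α β ∧
    0 < (dotRC α x * (starRingEnd ℂ) (dotRC β x)).im}

/-- The index set `{δ ∈ ℤ³ : δ·a > 0, δ·b ≤ 0, δ·c = 0}`, a set of representatives of
`C_{+-}(a,b)/ℤγ`. -/
def Cpm (a b c : Fin 3 → ℤ) : Set (Fin 3 → ℤ) :=
  {δ | 0 < dotZ δ a ∧ dotZ δ b ≤ 0 ∧ dotZ δ c = 0}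

/-- The factor `1 − e^{−2πi(δ·x − w)/(γ·x)}`. -/
noncomputable def gammaFactorMinus (γ : Fin 3 → ℤ) (w : ℂ) (x : Fin 3 → ℂ)
    (δ : Fin 3 → ℤ) : ℂ :=
  1 - Complex.exp (-(2 * Real.pi * Complex.I) * (dotC δ x - w) / dotC γ x)

/-- The factor `1 − e^{2πi(δ·x − w)/(γ·x)}`. -/
noncomputable def gammaFactorPlus (γ : Fin 3 → ℤ) (w : ℂ) (x : Fin 3 → ℂ)
    (δ : Fin 3 → ℤ) : ℂ :=
  1 - Complex.exp (2 * Real.pi * Complex.I * (dotC δ x - w) / dotC γ x)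

/-- The gamma function
`Γ_{a,b}(w,x) = ∏_{δ·a>0, δ·b≤0, δ·c=0} (1 − e^{−2πi(δ·x−w)/(γ·x)})
  · ∏_{δ·b>0, δ·a≤0, δ·c=0} (1 − e^{2πi(δ·x−w)/(γ·x)})⁻¹`,
where `γ` is the primitive vector positively proportional to `a × b` and `c` satisfies
`γ·c = 1`. -/
noncomputable def Gab (a b γ c : Fin 3 → ℤ) (w : ℂ) (x : Fin 3 → ℂ) : ℂ :=
  (∏' δ : Cpm a b c, gammaFactorMinus γ w x δ.1) *
    ∏' δ : Cpm b a c, (gammaFactorPlus γ w x δ.1)⁻¹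

/-- The real number `u · (q × p)`, where `x = p + i q` with `p, q ∈ ℝ³`. -/
def imForm (u : Fin 3 → ℤ) (x : Fin 3 → ℂ) : ℝ :=
  u 0 * ((x 1).im * (x 2).re - (x 2).im * (x 1).re) +
    u 1 * ((x 2).im * (x 0).re - (x 0).im * (x 2).re) +
    u 2 * ((x 0).im * (x 1).re - (x 1).im * (x 0).re)

lemma imForm_pos_of_mem_Uplus {u : Fin 3 → ℤ} {x : Fin 3 → ℂ} (hx : x ∈ Uplus u) :
    0 < imForm u x := by
  obtain ⟨α, β, ⟨hα, hβ, -, ε, hε, hdet⟩, him⟩ := hx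
  -- Pair `det(α,β,ε) u = (α·u) β×ε + (β·u) ε×α + (ε·u) α×β` with `q × p`.
  have key : (dotRC α x * (starRingEnd ℂ) (dotRC β x)).im * dotRZ ε u
      = det3 α β ε * imForm u x := by
    simp only [dotRC, dotRZ, det3, imForm, mul_im, add_re, add_im, mul_re, ofReal_re, ofReal_im,
      conj_re, conj_im] at *
    linear_combination
      (-((β 1 * ε 2 - β 2 * ε 1) * ((x 1).im * (x 2).re - (x 2).im * (x 1).re) +
        (β 2 * ε 0 - β 0 * ε 2) * ((x 2).im * (x 0).re - (x 0).im * (x 2).re) +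
        (β 0 * ε 1 - β 1 * ε 0) * ((x 0).im * (x 1).re - (x 1).im * (x 0).re))) * hα +
      (-((ε 1 * α 2 - ε 2 * α 1) * ((x 1).im * (x 2).re - (x 2).im * (x 1).re) +
        (ε 2 * α 0 - ε 0 * α 2) * ((x 2).im * (x 0).re - (x 0).im * (x 2).re) +
        (ε 0 * α 1 - ε 1 * α 0) * ((x 0).im * (x 1).re - (x 1).im * (x 0).re))) * hβ
  have h : 0 < det3 α β ε * imForm u x := key ▸ mul_pos him hε
  exact (mul_pos_iff_of_pos_left hdet).1 h

/-- The identity `δ × (a × b) = (δ·b) a - (δ·a) b`, paired with `q × p` for `x = p + i q`. -/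
lemma im_dotC_div {a b γ : Fin 3 → ℤ} {s : ℤ} (hs : 0 < s)
    (hγ : crossZ a b = fun i => s * γ i) (x : Fin 3 → ℂ) (hγx : dotC γ x ≠ 0) (δ : Fin 3 → ℤ) :
    (dotC δ x / dotC γ x).im =
      (dotZ δ b * imForm a x - dotZ δ a * imForm b x) / (s * normSq (dotC γ x)) := by
  have h0 : (a 1 * b 2 - a 2 * b 1 : ℝ) = s * γ 0 := by exact_mod_cast congrFun hγ 0
  have h1 : (a 2 * b 0 - a 0 * b 2 : ℝ) = s * γ 1 := by exact_mod_cast congrFun hγ 1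
  have h2 : (a 0 * b 1 - a 1 * b 0 : ℝ) = s * γ 2 := by exact_mod_cast congrFun hγ 2
  have hs' : (s : ℝ) ≠ 0 := by exact_mod_cast hs.ne'
  have hN : normSq (dotC γ x) ≠ 0 := by simpa using hγx
  rw [div_im, ← sub_div, div_eq_div_iff hN (mul_ne_zero hs' hN), ← mul_assoc]
  congr 1
  simp only [dotC, dotZ, imForm, mul_im, add_re, add_im, mul_re, intCast_re, intCast_im]
  push_cast
  linear_combination
    ((δ 1 * ((x 0).im * (x 1).re - (x 1).im * (x 0).re) -
      δ 2 * ((x 2).im * (x 0).re - (x 0).im * (x 2).re))) * h0 +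
    ((δ 2 * ((x 1).im * (x 2).re - (x 2).im * (x 1).re) -
      δ 0 * ((x 0).im * (x 1).re - (x 1).im * (x 0).re))) * h1 +
    ((δ 0 * ((x 2).im * (x 0).re - (x 0).im * (x 2).re) -
      δ 1 * ((x 1).im * (x 2).re - (x 2).im * (x 1).re))) * h2

/-- If `det(a,b,c) ≠ 0`, then `δ ↦ (δ·a, δ·b)` embeds the cone slice `Cpm a b c` into `ℕ × -ℕ`, so
exponential decay in both coordinates is summable. -/
lemma multipliable_of_exp_bound {a b c : Fin 3 → ℤ} (hdet : dotZ (crossZ a b) c ≠ 0)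
    {k l C : ℝ} (hk : 0 < k) (hl : 0 < l) (f : (Fin 3 → ℤ) → ℂ)
    (hf : ∀ δ, ‖f δ‖ ≤ C * Real.exp (dotZ δ a * (-k) + dotZ δ b * l)) :
    Multipliable fun δ : Cpm a b c => 1 - f δ.1 := by
  have hgeom : Summable fun m : ℕ × ℕ => Real.exp (m.1 * (-k)) * Real.exp (m.2 * (-l)) :=
    Summable.mul_of_nonneg (f := fun m : ℕ => Real.exp (m * (-k)))
      (g := fun m : ℕ => Real.exp (m * (-l)))
      (Real.summable_exp_nat_mul_iff.2 (by linarith))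
      (Real.summable_exp_nat_mul_iff.2 (by linarith))
      (fun _ => (Real.exp_pos _).le) (fun _ => (Real.exp_pos _).le)
  let e : Cpm a b c → ℕ × ℕ := fun δ => ((dotZ δ.1 a).toNat, (-dotZ δ.1 b).toNat)
  have he : Function.Injective e := by
    rintro ⟨δ, hδa, hδb, hδc⟩ ⟨η, hηa, hηb, hηc⟩ h
    simp only [e, Prod.mk.injEq] at h
    have ea : dotZ δ a = dotZ η a := by omega
    have eb : dotZ δ b = dotZ η b := by omega
    have ec : dotZ δ c = dotZ η c := by omega
    -- Cramer's rule for the system `(δ - η)·a = (δ - η)·b = (δ - η)·c = 0`.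
    have d0 : dotZ (crossZ a b) c * (δ 0 - η 0) = 0 := by
      simp only [dotZ, crossZ, Matrix.cons_val] at *
      linear_combination (b 1 * c 2 - b 2 * c 1) * ea + (c 1 * a 2 - c 2 * a 1) * eb +
        (a 1 * b 2 - a 2 * b 1) * ec
    have d1 : dotZ (crossZ a b) c * (δ 1 - η 1) = 0 := by
      simp only [dotZ, crossZ, Matrix.cons_val] at *
      linear_combination (b 2 * c 0 - b 0 * c 2) * ea + (c 2 * a 0 - c 0 * a 2) * eb +
        (a 2 * b 0 - a 0 * b 2) * ec
    have d2 : dotZ (crossZ a b) c * (δ 2 - η 2) = 0 := by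
      simp only [dotZ, crossZ, Matrix.cons_val] at *
      linear_combination (b 0 * c 1 - b 1 * c 0) * ea + (c 0 * a 1 - c 1 * a 0) * eb +
        (a 0 * b 1 - a 1 * b 0) * ec
    have e0 := (mul_eq_zero.1 d0).resolve_left hdet
    have e1 := (mul_eq_zero.1 d1).resolve_left hdet
    have e2 := (mul_eq_zero.1 d2).resolve_left hdet
    apply Subtype.ext
    funext i
    fin_cases i
    · exact sub_eq_zero.1 e0
    · exact sub_eq_zero.1 e1
    · exact sub_eq_zero.1 e2
  have hsum : Summable fun δ : Cpm a b c => ‖-f δ.1‖ := by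
    refine Summable.of_nonneg_of_le (fun _ => norm_nonneg _) (fun δ => ?_)
      ((hgeom.comp_injective he).mul_left C)
    obtain ⟨δ, hδa, hδb, hδc⟩ := δ
    have ha : (((dotZ δ a).toNat : ℕ) : ℝ) = dotZ δ a := by
      exact_mod_cast Int.toNat_of_nonneg hδa.le
    have hb : (((-dotZ δ b).toNat : ℕ) : ℝ) = -dotZ δ b := by
      exact_mod_cast Int.toNat_of_nonneg (neg_nonneg.2 hδb)
    rw [norm_neg]
    refine (hf δ).trans_eq ?_
    simp only [Function.comp, e, ha, hb]
    rw [← Real.exp_add]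
    ring_nf
  simpa only [sub_eq_add_neg] using multipliable_one_add_of_summable hsum

/-- On `U_a^+ ∩ U_b^+` the infinite products defining `Γ_{a,b}(w,x)` converge. -/
theorem Gab_multipliable (a b γ c : Fin 3 → ℤ)
    (ha : IsPrimitiveZ3 a) (hb : IsPrimitiveZ3 b)
    (hab : LinearIndependent ℝ ![fun i => (a i : ℝ), fun i => (b i : ℝ)])
    (hγ : IsPrimitiveZ3 γ) (hγab : ∃ s : ℤ, 0 < s ∧ crossZ a b = fun i => s * γ i)
    (hc : dotZ γ c = 1)
    (w : ℂ) (x : Fin 3 → ℂ) (hx : x ∈ Uplus a ∩ Uplus b) (hγx : dotC γ x ≠ 0) :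
    (Multipliable fun δ : Cpm a b c => gammaFactorMinus γ w x δ.1) ∧
      Multipliable fun δ : Cpm b a c => gammaFactorPlus γ w x δ.1 := by
  obtain ⟨s, hs, hcross⟩ := hγab
  have hA := imForm_pos_of_mem_Uplus hx.1
  have hB := imForm_pos_of_mem_Uplus hx.2
  have hN : 0 < normSq (dotC γ x) := normSq_pos.2 hγx
  have hs' : (0 : ℝ) < s := by exact_mod_cast hs
  have hdet : dotZ (crossZ a b) c = s := by
    rw [hcross]
    simp only [dotZ] at hc ⊢
    linear_combination s * hc
  have hdet' : dotZ (crossZ b a) c = -s := by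
    rw [← hdet]
    simp only [dotZ, crossZ, Matrix.cons_val]
    ring
  have hD : 0 < s * normSq (dotC γ x) := mul_pos hs' hN
  have hkA : 0 < 2 * Real.pi * imForm a x / (s * normSq (dotC γ x)) := by positivity
  have hkB : 0 < 2 * Real.pi * imForm b x / (s * normSq (dotC γ x)) := by positivity
  have him := im_dotC_div hs hcross x hγx
  constructor
  · refine multipliable_of_exp_bound (C := Real.exp (-(2 * Real.pi) * (w / dotC γ x).im))
      (by omega) hkB hkA
      (fun δ => Complex.exp (-(2 * Real.pi * Complex.I) * (dotC δ x - w) / dotC γ x))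
      (fun δ => le_of_eq ?_)
    have hre : (-(2 * Real.pi * Complex.I) * (dotC δ x - w) / dotC γ x).re
        = 2 * Real.pi * ((dotC δ x / dotC γ x).im - (w / dotC γ x).im) := by
      rw [mul_div_assoc, sub_div]
      simp
    rw [norm_exp, hre, him, ← Real.exp_add]
    ring_nf
  · refine multipliable_of_exp_bound (C := Real.exp (2 * Real.pi * (w / dotC γ x).im))
      (by omega) hkA hkB
      (fun δ => Complex.exp (2 * Real.pi * Complex.I * (dotC δ x - w) / dotC γ x))
      (fun δ => le_of_eq ?_)
    have hre : (2 * Real.pi * Complex.I * (dotC δ x - w) / dotC γ x).re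
        = -(2 * Real.pi) * ((dotC δ x / dotC γ x).im - (w / dotC γ x).im) := by
      rw [mul_div_assoc, sub_div]
      simp
    rw [norm_exp, hre, him, ← Real.exp_add]
    ring_nf
end

section
/- Let r ≥ 1 and let ι : ℤ^r → ℂ be an additive group homomorphism whose values x_j = ι(e_j) on the standard basis vectors are linearly independent over ℚ and span ℂ over ℝ. Then the group cohomology H^i(ℤ^r, O(ℂ)^×) vanishes for all i ≥ r. -/
/-!
Only one property of the module `M = O(ℂ)^×` matters: with `c = ι(e_0)`, which is nonzero by linear
independence, the operator `e_0 - 1 : f ↦ f(z + c) / f(z)` is surjective on `M`. Since a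
nowhere-vanishing entire function has an entire logarithm (`exists_entire_log`), this follows, after
rescaling `c` to `1`, from Guichard's theorem `exists_entire_difference`: every entire function `g` is
of the form `h(z + 1) - h(z)` with `h` entire. For `g = z^n` Hurwitz's contour integral
`∮ w^(-n-1) e^(zw) / (e^w - 1) dw` over `|w| = (2n + 1)π` is a solution (up to `2πi / n!`) small enough
that the solutions can be summed against the Taylor coefficients of any entire `g`.

Algebraically, let `P_j = ℤ[ℤ^r / ⟨e_0, …, e_{j-1}⟩]`, the permutation module on `Tail r j`. Then `P_0`
is the regular representation, hence projective, `P_r` is trivial, and there are exact sequences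
`0 → P_j → P_j → P_{j+1} → 0` with first map `e_j - 1` (`tail_shortExact`). Surjectivity of `e_0 - 1`
on `M` gives `Ext^1(P_1, M) = 0`, projectivity of `P_0` gives `Ext^i(P_1, M) = 0` for `i ≥ 2`, and the
long exact sequences give inductively `Ext^i(P_j, M) = 0` for `i ≥ j ≥ 1`. For `j = r` this is the
claim (`groupCohomology_subsingleton`).
-/


open Complex

/-- The multiplicative abelian group `O(ℂ)^×` of nowhere-vanishing entire functions. -/
def EntireUnits : Type := {f : ℂ → ℂ // Differentiable ℂ f ∧ ∀ z, f z ≠ 0}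

noncomputable instance : CommGroup EntireUnits where
  mul f g := ⟨fun z => f.1 z * g.1 z, f.2.1.mul g.2.1,
    fun z => mul_ne_zero (f.2.2 z) (g.2.2 z)⟩
  one := ⟨fun _ => 1, differentiable_const 1, fun _ => one_ne_zero⟩
  inv f := ⟨fun z => (f.1 z)⁻¹, f.2.1.inv f.2.2, fun z => inv_ne_zero (f.2.2 z)⟩
  mul_assoc f g h := Subtype.ext (funext fun z => mul_assoc _ _ _)
  one_mul f := Subtype.ext (funext fun z => one_mul _)
  mul_one f := Subtype.ext (funext fun z => mul_one _)
  inv_mul_cancel f := Subtype.ext (funext fun z => inv_mul_cancel₀ (f.2.2 z))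
  mul_comm f g := Subtype.ext (funext fun z => mul_comm _ _)

/-- Translation of a nowhere-vanishing entire function by `c ∈ ℂ`. -/
def EntireUnits.translate (c : ℂ) : EntireUnits →* EntireUnits where
  toFun f := ⟨fun z => f.1 (z + c), f.2.1.comp (differentiable_id.add_const c),
    fun z => f.2.2 (z + c)⟩
  map_one' := rfl
  map_mul' f g := rfl

/-- The action of `ℤ^r` on `O(ℂ)^×` given by `(n · f)(z) = f(z + ι(n))`, packaged as a
representation over `ℤ` of the (multiplicative avatar of the) group `ℤ^r` on the additive
avatar of `O(ℂ)^×`. -/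
noncomputable def entireRep (r : ℕ) (ι : (Fin r → ℤ) →+ ℂ) :
    Representation ℤ (Multiplicative (Fin r → ℤ)) (Additive EntireUnits) where
  toFun n := (MonoidHom.toAdditive (EntireUnits.translate (ι n.toAdd))).toIntLinearMap
  map_one' := by
    apply LinearMap.ext
    intro f
    exact Subtype.ext (funext fun z => by
      show f.toMul.1 (z + ι (Multiplicative.toAdd 1)) = f.toMul.1 z
      simp)
  map_mul' m n := by
    apply LinearMap.ext
    intro f
    exact Subtype.ext (funext fun z => by
      show f.toMul.1 (z + ι (m * n).toAdd) = f.toMul.1 (z + ι m.toAdd + ι n.toAdd)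
      have h : ι (m * n).toAdd = ι m.toAdd + ι n.toAdd := by rw [toAdd_mul, map_add]
      rw [h, add_assoc])

/-- `H^i(ℤ^r, O(ℂ)^×)`, the group cohomology of `ℤ^r` with coefficients in the
nowhere-vanishing entire functions, acted on by translation through `ι`. -/
noncomputable def entireCohomology (r : ℕ) (ι : (Fin r → ℤ) →+ ℂ) (i : ℕ) :=
  groupCohomology (Rep.of (entireRep r ι)) i

/-! ### Entire difference equations -/

section Analysis
open MeasureTheory Set Metric
open scoped Real Topology

/-- The radius `(2n + 1)π`: circles of this radius about `0` stay away from the zeros `2πik` of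
`e^w - 1`. -/
noncomputable def hradius (n : ℕ) : ℝ := (2 * n + 1) * π

lemma hradius_pos (n : ℕ) : 0 < hradius n := by unfold hradius; positivity

/-- Away from the imaginary axis `|e^w|` is far from `1`; near it, `|Im w|` is close to `(2n + 1)π`,
so `Re e^w ≤ 0`. -/
lemma norm_exp_sub_one_ge (n : ℕ) (w : ℂ) (hw : ‖w‖ = hradius n) : 1 / 4 ≤ ‖exp w - 1‖ := by
  have hpi := Real.pi_gt_three
  by_cases h : 1 / 2 ≤ |w.re|
  · rcases le_abs'.1 h with h | h
    · have h1 : ‖exp w‖ ≤ 3 / 4 := by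
        rw [norm_exp]
        have : 2 ≤ Real.exp 1 := by linarith [Real.add_one_le_exp (1:ℝ)]
        have h2 : Real.exp w.re ≤ Real.exp (-(1 / 2)) := Real.exp_le_exp.2 (by linarith)
        have h3 : 3 / 2 ≤ Real.exp (1 / 2) := by linarith [Real.add_one_le_exp (1/2:ℝ)]
        rw [Real.exp_neg] at h2
        have h4 : (Real.exp (1 / 2))⁻¹ ≤ (3 / 2)⁻¹ := inv_anti₀ (by norm_num) h3
        norm_num at h4 h2 ⊢
        linarith
      have := norm_sub_norm_le (1 : ℂ) (exp w)
      rw [norm_sub_rev] at this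
      simp at this
      linarith
    · have h1 : 3 / 2 ≤ ‖exp w‖ := by
        rw [norm_exp]
        linarith [Real.add_one_le_exp w.re]
      have := norm_sub_norm_le (exp w) 1
      simp at this
      linarith
  · push Not at h
    have hR : 3 ≤ hradius n := by
      unfold hradius
      have : (0 : ℝ) ≤ n := n.cast_nonneg
      nlinarith
    have hsq : w.re ^ 2 + w.im ^ 2 = hradius n ^ 2 := by
      rw [← hw, Complex.sq_norm, normSq_apply]; ring
    have hre : w.re ^ 2 ≤ 1 / 4 := by
      have := sq_lt_sq' (by linarith [abs_nonneg w.re]) h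
      rw [sq_abs] at this
      linarith
    have him1 : |w.im| ≤ hradius n := abs_le_of_sq_le_sq (by nlinarith [sq_nonneg w.re]) (by linarith)
    have him2 : hradius n - 1 / 4 ≤ |w.im| := by
      by_contra hlt
      nlinarith [sq_abs w.im, abs_nonneg w.im]
    have hcos : Real.cos w.im ≤ 0 := by
      rw [← Real.cos_abs]
      have : |w.im| = (|w.im| - 2 * n * π - π) + π + n * (2 * π) := by ring
      rw [this, Real.cos_add_nat_mul_two_pi, Real.cos_add_pi]
      have h0 : 0 ≤ Real.cos (|w.im| - 2 * n * π - π) := by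
        apply Real.cos_nonneg_of_mem_Icc
        unfold hradius at him1 him2
        constructor <;> linarith
      linarith
    have hre' : (exp w - 1).re ≤ -1 := by
      rw [sub_re, exp_re, one_re]
      have := mul_nonneg (Real.exp_pos w.re).le (neg_nonneg.2 hcos)
      linarith
    have := abs_re_le_norm (exp w - 1)
    rw [abs_of_nonpos (by linarith)] at this
    linarith

lemma exp_sub_one_ne_zero (n : ℕ) (w : ℂ) (hw : ‖w‖ = hradius n) : exp w - 1 ≠ 0 := by
  rw [← norm_pos_iff]
  linarith [norm_exp_sub_one_ge n w hw]

/-- Hurwitz's solution, up to the factor `2πi / n!`, of the difference equation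
`h(z + 1) - h(z) = z^n`. It differs from a Bernoulli polynomial by a periodic function, which
makes it much smaller: see `hurwitz_norm_le`. -/
noncomputable def hurwitz (n : ℕ) (z : ℂ) : ℂ :=
  ∮ w in C(0, hradius n), (1 / w ^ (n + 1)) * (exp (z * w) / (exp w - 1))

lemma hurwitz_continuousOn (n : ℕ) (z : ℂ) :
    ContinuousOn (fun w => (1 / w ^ (n + 1)) * (exp (z * w) / (exp w - 1))) (sphere 0 (hradius n)) := by
  have h0 : ∀ w ∈ sphere (0:ℂ) (hradius n), w ^ (n + 1) ≠ 0 := fun w hw => by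
    apply pow_ne_zero
    rw [← norm_pos_iff, mem_sphere_zero_iff_norm.1 hw]
    exact hradius_pos n
  have h1 : ∀ w ∈ sphere (0:ℂ) (hradius n), exp w - 1 ≠ 0 := fun w hw =>
    exp_sub_one_ne_zero n w (mem_sphere_zero_iff_norm.1 hw)
  fun_prop (disch := assumption)

lemma hurwitz_diff (n : ℕ) (z : ℂ) :
    hurwitz n (z + 1) - hurwitz n z = 2 * π * I / n.factorial * z ^ n := by
  have hR := hradius_pos n
  rw [hurwitz, hurwitz, ← circleIntegral.integral_sub
    ((hurwitz_continuousOn n _).circleIntegrable hR.le)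
    ((hurwitz_continuousOn n _).circleIntegrable hR.le)]
  have h : ∮ w in C(0, hradius n), (1 / (w - 0) ^ (n + 1)) • exp (z * w) =
      (2 * π * I / n.factorial) • iteratedDeriv n (fun w => exp (z * w)) 0 :=
    DifferentiableOn.circleIntegral_one_div_sub_center_pow_smul hR n (by fun_prop)
  rw [iteratedDeriv_cexp_const_mul] at h
  simp only [sub_zero, mul_zero, exp_zero, mul_one, smul_eq_mul] at h
  rw [← h]
  refine circleIntegral.integral_congr hR.le fun w hw => ?_
  have h1 := exp_sub_one_ne_zero n w (mem_sphere_zero_iff_norm.1 hw)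
  rw [← mul_sub, ← sub_div, add_mul, one_mul, exp_add, ← mul_sub_one, mul_div_cancel_right₀ _ h1]

/-- The factor `1 / n!` makes `∑ g⁽ⁿ⁾(0) hurwitz n z` converge locally uniformly for every entire
`g`. -/
lemma hurwitz_norm_le (n : ℕ) (z : ℂ) :
    ‖hurwitz n z‖ ≤ 8 * π * Real.exp (hradius n * ‖z‖) / n.factorial := by
  have hR := hradius_pos n
  have h : ‖hurwitz n z‖ ≤ 2 * π * hradius n *
      (1 / hradius n ^ (n + 1) * (Real.exp (hradius n * ‖z‖) * 4)) := by
    refine circleIntegral.norm_integral_le_of_norm_le_const hR.le fun w hw => ?_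
    have hw' := mem_sphere_zero_iff_norm.1 hw
    rw [norm_mul, norm_div, norm_pow, hw', norm_one, norm_div, div_eq_mul_inv ‖exp (z * w)‖]
    gcongr
    · rw [norm_exp]
      refine Real.exp_le_exp.2 ((re_le_norm _).trans ?_)
      rw [norm_mul, hw', mul_comm]
    · rw [show (4 : ℝ) = (1 / 4)⁻¹ by norm_num]
      exact inv_anti₀ (by norm_num) (norm_exp_sub_one_ge n w hw')
  have hf : (n.factorial : ℝ) ≤ hradius n ^ n := by
    calc (n.factorial : ℝ) ≤ (n : ℝ) ^ n := by exact_mod_cast n.factorial_le_pow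
      _ ≤ _ := by
        have := Real.pi_gt_three
        have : (0 : ℝ) ≤ n := n.cast_nonneg
        gcongr
        unfold hradius
        nlinarith
  refine h.trans ?_
  have : 2 * π * hradius n * (1 / hradius n ^ (n + 1) * (Real.exp (hradius n * ‖z‖) * 4)) =
    8 * π * Real.exp (hradius n * ‖z‖) / hradius n ^ n := by
    field_simp
    ring
  rw [this]
  gcongr

lemma hurwitz_differentiable (n : ℕ) : Differentiable ℂ (hurwitz n) := by
  intro z₀
  have hR := hradius_pos n
  set c : ℝ → ℂ := circleMap 0 (hradius n)
  have hc : Continuous c := continuous_circleMap _ _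
  have hcn : ∀ θ, ‖c θ‖ = hradius n := fun θ => by simp [c, abs_of_pos hR]
  set a : ℝ → ℂ := fun θ => deriv c θ * (1 / c θ ^ (n + 1)) / (exp (c θ) - 1)
  have ha : Continuous a := by
    have h0 : ∀ θ, c θ ^ (n + 1) ≠ 0 := fun θ => pow_ne_zero _ (by
      rw [← norm_pos_iff, hcn]; exact hR)
    have h1 : ∀ θ, exp (c θ) - 1 ≠ 0 := fun θ => exp_sub_one_ne_zero n _ (hcn θ)
    have h2 : deriv c = fun θ => c θ * I := by
      ext θ; simp [c, deriv_circleMap]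
    simp only [a, h2]
    fun_prop (disch := assumption)
  have key := intervalIntegral.hasDerivAt_integral_of_dominated_loc_of_deriv_le (μ := volume)
    (F := fun z θ => a θ * exp (z * c θ)) (F' := fun z θ => a θ * (exp (z * c θ) * c θ))
    (a := 0) (b := 2 * π) (x₀ := z₀) (s := ball z₀ 1)
    (bound := fun θ => ‖a θ‖ * (Real.exp ((‖z₀‖ + 1) * hradius n) * hradius n))
    (ball_mem_nhds _ one_pos)
    (Filter.Eventually.of_forall fun z => (by fun_prop : Continuous _).aestronglyMeasurable)
    ((by fun_prop : Continuous _).intervalIntegrable _ _)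
    ((by fun_prop : Continuous _).aestronglyMeasurable)
    (Filter.Eventually.of_forall fun θ _ z hz => by
      rw [norm_mul, norm_mul, hcn, norm_exp]
      gcongr
      refine (re_le_norm _).trans ?_
      rw [norm_mul, hcn]
      gcongr
      have := norm_sub_norm_le z z₀
      rw [mem_ball, dist_eq_norm] at hz
      linarith)
    ((by fun_prop : Continuous _).intervalIntegrable _ _)
    (Filter.Eventually.of_forall fun θ _ z hz => by
      have := (((hasDerivAt_id z).mul_const (c θ)).cexp).const_mul (a θ)
      simpa using this)
  have heq : hurwitz n = fun z => ∫ θ in (0:ℝ)..2 * π, a θ * exp (z * c θ) := by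
    ext z
    rw [hurwitz, circleIntegral]
    congr 1
    ext θ
    simp only [a, c, smul_eq_mul]
    ring
  rw [heq]
  exact key.2.differentiableAt

/-- Guichard's theorem: apply `hurwitz` to the Taylor series of `g` term by term. -/
theorem exists_entire_difference {g : ℂ → ℂ} (hg : Differentiable ℂ g) :
    ∃ h : ℂ → ℂ, Differentiable ℂ h ∧ ∀ z, h (z + 1) - h z = g z := by
  set b : ℕ → ℂ := fun n => iteratedDeriv n g 0 / (2 * π * I)
  have hpi := Real.pi_pos
  have hbnd : ∀ (R : ℝ), ∃ u : ℕ → ℝ, Summable u ∧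
      ∀ n z, ‖z‖ ≤ R → ‖b n * hurwitz n z‖ ≤ u n := by
    intro R
    have hs := (hasSum_taylorSeries_of_entire hg 0 (Real.exp (2 * π * R) : ℂ)).summable.norm
    refine ⟨_, hs.mul_left (4 * Real.exp (π * R)), fun n z hz => ?_⟩
    have h1 := hurwitz_norm_le n z
    have h2 : Real.exp (hradius n * ‖z‖) ≤ Real.exp (π * R) * Real.exp (2 * π * R) ^ n := by
      rw [← Real.exp_nat_mul, ← Real.exp_add]
      refine Real.exp_le_exp.2 ?_
      have := mul_le_mul_of_nonneg_left hz (hradius_pos n).le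
      refine this.trans_eq ?_
      unfold hradius; ring
    calc ‖b n * hurwitz n z‖ ≤ ‖iteratedDeriv n g 0‖ / (2 * π) *
          (8 * π * (Real.exp (π * R) * Real.exp (2 * π * R) ^ n) / n.factorial) := by
          rw [norm_mul]
          gcongr
          · simp [b, abs_of_pos hpi]
          · exact h1.trans (by gcongr)
      _ = _ := by
          simp only [sub_zero, norm_smul, norm_inv, norm_pow, norm_natCast, norm_real,
            Real.norm_eq_abs, Real.abs_exp]
          field_simp
          ring
  have hsum : ∀ z, Summable fun n => b n * hurwitz n z := fun z => by
    obtain ⟨u, hu, h⟩ := hbnd ‖z‖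
    exact Summable.of_norm_bounded hu fun n => h n z le_rfl
  refine ⟨fun z => ∑' n, b n * hurwitz n z, fun z => ?_, fun z => ?_⟩
  · obtain ⟨u, hu, h⟩ := hbnd (‖z‖ + 1)
    refine (differentiableOn_tsum_of_summable_norm (U := ball 0 (‖z‖ + 1)) hu
      (fun n => ((hurwitz_differentiable n).const_mul (b n)).differentiableOn) isOpen_ball
      fun n w hw => h n w (mem_ball_zero_iff.1 hw).le).differentiableAt (isOpen_ball.mem_nhds ?_)
    simp
  · rw [← (hsum (z + 1)).tsum_sub (hsum z), ← taylorSeries_eq_of_entire' 0 z hg]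
    congr 1
    ext n
    rw [← mul_sub, hurwitz_diff]
    simp only [b, sub_zero]
    have := two_pi_I_ne_zero
    field_simp

theorem exists_entire_log {f : ℂ → ℂ} (hf : Differentiable ℂ f) (h0 : ∀ z, f z ≠ 0) :
    ∃ g : ℂ → ℂ, Differentiable ℂ g ∧ ∀ z, exp (g z) = f z := by
  have hd : Differentiable ℂ (deriv f) := (hf.contDiff (n := 2)).differentiable_deriv_two
  obtain ⟨F, hF⟩ := (hd.div hf h0).isExactOn_univ
  have hF' : ∀ z, HasDerivAt F (deriv f z / f z) z := fun z => hF z trivial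
  have hder : ∀ z, HasDerivAt (fun z => f z * exp (-F z)) 0 z := fun z => by
    refine ((hf z).hasDerivAt.mul (hF' z).neg.cexp).congr_deriv ?_
    have := h0 z
    field_simp
    simp
  refine ⟨fun z => F z + (log (f 0) - F 0), fun z => ((hF' z).differentiableAt.add_const _),
    fun z => ?_⟩
  have hc := is_const_of_deriv_eq_zero (fun z => (hder z).differentiableAt)
    (fun z => (hder z).deriv) z 0
  beta_reduce at hc
  rw [exp_add, sub_eq_add_neg, exp_add, exp_log (h0 0), ← hc, mul_left_comm, ← exp_add]
  simp

theorem exists_entire_unit_quotient {f : ℂ → ℂ} (hf : Differentiable ℂ f) (h0 : ∀ z, f z ≠ 0)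
    {c : ℂ} (hc : c ≠ 0) :
    ∃ h : ℂ → ℂ, Differentiable ℂ h ∧ ∀ z, exp (h (z + c)) / exp (h z) = f z := by
  obtain ⟨g, hg, hgf⟩ := exists_entire_log hf h0
  obtain ⟨h, hh, hhg⟩ := exists_entire_difference (g := fun z => g (c * z)) (by fun_prop)
  refine ⟨fun z => h (z / c), by fun_prop, fun z => ?_⟩
  beta_reduce
  rw [← exp_sub, add_div, div_self hc, hhg, mul_div_cancel₀ z hc, hgf]

end Analysis

/-! ### The difference sequence of a permutation module -/

section Alg
open CategoryTheory Abelian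

variable {G : Type} [CommGroup G] {X Y : Type} [MulAction G X] [MulAction G Y]

/-- The endomorphism `t - 1` of the permutation module `ℤ[X]`; it is equivariant because `G` is
commutative. -/
noncomputable def permDiff (X : Type) [MulAction G X] (t : G) :
    Rep.ofMulAction ℤ G X ⟶ Rep.ofMulAction ℤ G X :=
  Rep.applyAsHom (Rep.ofMulAction ℤ G X) t - 𝟙 _

lemma permDiff_apply (t : G) (f : MonoidAlgebra ℤ X) :
    (permDiff X t).hom f = Representation.ofMulAction ℤ G X t f - f := by
  rfl

/-- The map of permutation modules `ℤ[X] → ℤ[Y]` induced by an equivariant map `q : X → Y`. -/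
noncomputable def permMap (q : X → Y) (hq : ∀ (g : G) x, q (g • x) = g • q x) :
    Rep.ofMulAction ℤ G X ⟶ Rep.ofMulAction ℤ G Y :=
  Rep.ofHom ⟨(MonoidAlgebra.coeffLinearEquiv ℤ).symm.toLinearMap ∘ₗ Finsupp.lmapDomain ℤ ℤ q ∘ₗ
    (MonoidAlgebra.coeffLinearEquiv ℤ).toLinearMap, fun g => by
      ext x; simp [hq]⟩

lemma permMap_single (q : X → Y) (hq : ∀ (g : G) x, q (g • x) = g • q x) (x : X) (n : ℤ) :
    (permMap q hq).hom (MonoidAlgebra.single x n) = MonoidAlgebra.single (q x) n := by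
  simp [permMap]

/-- A `t`-invariant element of `ℤ[X]` has `t`-invariant finite support, so it is zero when `t` acts
with infinite orbits only. -/
lemma permDiff_injective (t : G) (hfree : ∀ (x : X) (n : ℤ), t ^ n • x = x → n = 0) :
    Function.Injective (permDiff X t).hom := by
  rw [injective_iff_map_eq_zero]
  intro f hf
  rw [permDiff_apply, sub_eq_zero] at hf
  have h1 : ∀ x, f.coeff (t⁻¹ • x) = f.coeff x := fun x => by
    rw [← Representation.coeff_ofMulAction, hf]
  have h2 : ∀ (n : ℕ) x, f.coeff (t⁻¹ ^ n • x) = f.coeff x := by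
    intro n
    induction n with
    | zero => simp
    | succ n ih => intro x; rw [pow_succ, mul_smul, ih, h1]
  ext x
  by_contra hx
  have hinj : Function.Injective (fun n : ℕ => t⁻¹ ^ n • x) := by
    intro a b hab
    have : t ^ ((b : ℤ) - a) • x = x := by
      have h := congrArg (fun y => t ^ (b : ℤ) • y) hab
      simp only [smul_smul] at h
      rw [zpow_sub, ← smul_smul]
      simpa [smul_smul] using h
    have := hfree x _ this
    omega
  have hinf := Set.infinite_range_of_injective hinj
  refine hinf (f.coeff.hasFiniteSupport.subset ?_)
  rintro _ ⟨n, rfl⟩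
  rw [Function.mem_support, h2]
  exact hx

/-- If the fibres of `q` are the orbits of `t`, then the kernel of `ℤ[X] → ℤ[Y]` is the image of
`t - 1`. The section `s` of `q` picks a base point in every orbit. -/
lemma permDiff_exact (t : G) (q : X → Y) (hq : ∀ (g : G) x, q (g • x) = g • q x)
    (s : Y → X) (horb : ∀ x, ∃ n : ℤ, x = t ^ n • s (q x)) (f : MonoidAlgebra ℤ X)
    (hf : (permMap q hq).hom f = 0) : ∃ F, (permDiff X t).hom F = f := by
  let D : MonoidAlgebra ℤ X →ₗ[ℤ] MonoidAlgebra ℤ X := (permDiff X t).hom.toLinearMap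
  let Q : MonoidAlgebra ℤ X →ₗ[ℤ] MonoidAlgebra ℤ Y := (permMap q hq).hom.toLinearMap
  let S : MonoidAlgebra ℤ Y →ₗ[ℤ] MonoidAlgebra ℤ X :=
    (MonoidAlgebra.coeffLinearEquiv ℤ).symm.toLinearMap ∘ₗ Finsupp.lmapDomain ℤ ℤ s ∘ₗ
    (MonoidAlgebra.coeffLinearEquiv ℤ).toLinearMap
  have hstep : ∀ (x : X) (n : ℤ),
      (LinearMap.range D).mkQ (MonoidAlgebra.single (t ^ n • x) 1) =
        (LinearMap.range D).mkQ (MonoidAlgebra.single x 1) := by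
    have h1 : ∀ x, (LinearMap.range D).mkQ (MonoidAlgebra.single (t • x) 1) =
        (LinearMap.range D).mkQ (MonoidAlgebra.single x 1) := fun x => by
      rw [← sub_eq_zero, ← map_sub, Submodule.mkQ_apply, Submodule.Quotient.mk_eq_zero]
      exact ⟨MonoidAlgebra.single x 1, by
        change (permDiff X t).hom _ = _
        rw [permDiff_apply, Representation.ofMulAction_single]⟩
    intro x n
    induction n with
    | zero => simp
    | succ n ih => rw [add_comm, zpow_add, mul_smul, zpow_one, h1, ih]
    | pred n ih => rw [← ih, ← h1, smul_smul, ← zpow_one_add]; congr 4; ring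
  -- Modulo the image of `t - 1`, every `x` equals the base point `s (q x)` of its orbit, so the
  -- quotient map factors through `ℤ[X] → ℤ[Y]`.
  have hS : (LinearMap.range D).mkQ ∘ₗ S ∘ₗ Q = (LinearMap.range D).mkQ := by
    apply MonoidAlgebra.lhom_ext'
    intro x
    ext
    obtain ⟨n, hn⟩ := horb x
    change (LinearMap.range D).mkQ (S ((permMap q hq).hom (MonoidAlgebra.single x 1))) =
      (LinearMap.range D).mkQ (MonoidAlgebra.single x 1)
    rw [permMap_single]
    have : S (MonoidAlgebra.single (q x) 1) = MonoidAlgebra.single (s (q x)) 1 := by simp [S]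
    rw [this]
    conv_rhs => rw [hn]
    rw [hstep]
  have h0 : (LinearMap.range D).mkQ f = 0 := by
    rw [← hS]
    change (LinearMap.range D).mkQ (S ((permMap q hq).hom f)) = 0
    rw [hf]; simp
  rw [Submodule.mkQ_apply, Submodule.Quotient.mk_eq_zero] at h0
  exact h0

lemma permDiff_comp_permMap (t : G) (q : X → Y) (hq : ∀ (g : G) x, q (g • x) = g • q x)
    (ht : ∀ x, q (t • x) = q x) : permDiff X t ≫ permMap q hq = 0 := by
  apply Rep.hom_ext
  apply Representation.IntertwiningMap.ext
  apply MonoidAlgebra.lhom_ext'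
  intro x
  apply LinearMap.ext_ring
  change (permMap q hq).hom ((permDiff X t).hom (MonoidAlgebra.single x 1)) = 0
  rw [permDiff_apply, map_sub, Representation.ofMulAction_single]
  erw [permMap_single, permMap_single]
  rw [ht, sub_self]

lemma rep_exact {k G : Type} [CommRing k] [Group G] (S : ShortComplex (Rep.{0} k G))
    (h : ∀ x, S.g.hom x = 0 → ∃ y, S.f.hom y = x) : S.Exact := by
  refine (forget₂ (Rep.{0} k G) (ModuleCat.{0} k)).reflects_exact_of_faithful _ ?_
  rw [ShortComplex.moduleCat_exact_iff]
  exact h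

lemma perm_shortExact (t : G) (q : X → Y) (hq : ∀ (g : G) x, q (g • x) = g • q x)
    (ht : ∀ x, q (t • x) = q x) (s : Y → X) (hs : ∀ y, q (s y) = y)
    (horb : ∀ x, ∃ n : ℤ, x = t ^ n • s (q x))
    (hfree : ∀ (x : X) (n : ℤ), t ^ n • x = x → n = 0) :
    (ShortComplex.mk _ _ (permDiff_comp_permMap t q hq ht)).ShortExact where
  exact := rep_exact _ (permDiff_exact t q hq s horb)
  mono_f := (Rep.mono_iff_injective _).2 (permDiff_injective t hfree)
  epi_g := (Rep.epi_iff_surjective _).2 (by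
    intro f
    refine ⟨.ofCoeff (Finsupp.mapDomain s f.coeff), ?_⟩
    have : q ∘ s = id := funext hs
    apply MonoidAlgebra.coeff_injective
    change Finsupp.mapDomain q (Finsupp.mapDomain s f.coeff) = f.coeff
    rw [← Finsupp.mapDomain_comp, this, Finsupp.mapDomain_id])
end Alg

/-! ### Vanishing of Ext along short exact sequences -/

section Ext
open CategoryTheory Abelian

variable {G : Type}

/-- In positive degrees, group cohomology vanishes as soon as `Ext(k, M)` does: both are computed
by the bar resolution. -/
lemma groupCohomology_subsingleton_of_ext {k : Type} [CommRing k] [Group G]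
    [HasExt.{0} (Rep.{0} k G)] (M : Rep.{0} k G) (i : ℕ) (hi : 1 ≤ i)
    (h : Subsingleton (Ext (Rep.trivial k G k) M i)) : Subsingleton (groupCohomology M i) := by
  obtain ⟨p, rfl⟩ := Nat.exists_eq_add_of_le' hi
  let P := Rep.barResolution k G
  have hz : Limits.IsZero ((P.complex.linearYonedaObj k M).homology (p + 1)) := by
    rw [← HomologicalComplex.exactAt_iff_isZero_homology,
      HomologicalComplex.exactAt_iff' _ p (p + 1) (p + 2) (by simp) (by simp),
      ShortComplex.moduleCat_exact_iff]
    intro f hf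
    have hf' : P.complex.d (p + 2) (p + 1) ≫ (show P.complex.X (p + 1) ⟶ M from f) = 0 := hf
    obtain ⟨g, hg⟩ := (P.extMk_eq_zero_iff _ (p + 2) rfl hf' p rfl).1 (Subsingleton.elim _ _)
    exact ⟨g, hg⟩
  exact ModuleCat.subsingleton_of_isZero (hz.of_iso (groupCohomologyIso M (p + 1) P))

variable {C : Type*} [Category C] [Abelian C] [HasExt.{0} C] {S : ShortComplex C}

lemma ext_subsingleton_step (hS : S.ShortExact) (M : C) (n : ℕ)
    (h1 : Subsingleton (Ext S.X₁ M n)) (h2 : Subsingleton (Ext S.X₂ M (n + 1))) :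
    Subsingleton (Ext S.X₃ M (n + 1)) := by
  refine subsingleton_of_forall_eq 0 fun x => ?_
  obtain ⟨y, rfl⟩ := Ext.contravariant_sequence_exact₃ hS M x (Subsingleton.elim _ _) (add_comm 1 n)
  rw [Subsingleton.elim y 0, Ext.comp_zero]

lemma ext_one_subsingleton (hS : S.ShortExact) (M : C)
    (h1 : ∀ φ : S.X₁ ⟶ M, ∃ ψ, S.f ≫ ψ = φ) (h2 : Subsingleton (Ext S.X₂ M 1)) :
    Subsingleton (Ext S.X₃ M 1) := by
  refine subsingleton_of_forall_eq 0 fun x => ?_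
  obtain ⟨y, rfl⟩ := Ext.contravariant_sequence_exact₃ hS M x (Subsingleton.elim _ _) (add_zero 1)
  obtain ⟨φ, rfl⟩ := (Ext.mk₀_bijective _ _).2 y
  obtain ⟨ψ, rfl⟩ := h1 φ
  rw [← Ext.mk₀_comp_mk₀, hS.extClass_comp_assoc]

end Ext

/-! ### The tower of permutation modules over `ℤ^r` -/

section Tail
open CategoryTheory Abelian


/-- The set of vectors indexed by the coordinates `j, …, r - 1`, i.e. the quotient of `ℤ^r` by the
span of the first `j` basis vectors. -/
def Tail (r j : ℕ) : Type := {i : Fin r // j ≤ i.1} → ℤ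

instance (r j : ℕ) : AddCommGroup (Tail r j) := inferInstanceAs (AddCommGroup (_ → ℤ))

/-- `ℤ^r` acts on `Tail r j` by translation through the last `r - j` coordinates. -/
instance (r j : ℕ) : MulAction (Multiplicative (Fin r → ℤ)) (Tail r j) where
  smul g x := fun i => g.toAdd i + x i
  one_smul x := funext fun i => zero_add (x i)
  mul_smul g h x := funext fun i => add_assoc (g.toAdd i) (h.toAdd i) (x i)

variable {r : ℕ}

lemma Tail.smul_apply {j : ℕ} (g : Multiplicative (Fin r → ℤ)) (x : Tail r j) (i) :
    (g • x) i = g.toAdd i + x i := rfl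

/-- Forgetting the coordinate `j`. -/
def Tail.restrict (r j : ℕ) (x : Tail r j) : Tail r (j + 1) := fun i => x ⟨i.1, by omega⟩

/-- Extension by `0` in the coordinate `j`, a non-equivariant section of `Tail.restrict`. -/
def Tail.extend (r j : ℕ) (y : Tail r (j + 1)) : Tail r j :=
  fun i => if h : j + 1 ≤ i.1.1 then y ⟨i.1, h⟩ else 0

/-- The `j`-th standard basis vector of `ℤ^r`, written multiplicatively. -/
def gen (j : Fin r) : Multiplicative (Fin r → ℤ) := Multiplicative.ofAdd (Pi.single j 1)

lemma gen_zpow_toAdd (j : Fin r) (n : ℤ) (i : Fin r) :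
    (gen j ^ n).toAdd i = if i = j then n else 0 := by
  simp [gen, toAdd_zpow, Pi.single_apply]

lemma gen_toAdd (j : Fin r) (i : Fin r) :
    (gen j).toAdd i = if i = j then 1 else 0 := by
  simp [gen, Pi.single_apply]

lemma Tail.restrict_gen_smul (j : ℕ) (hj : j < r) (x : Tail r j) :
    Tail.restrict r j (gen ⟨j, hj⟩ • x) = Tail.restrict r j x := by
  funext i
  have hi : i.1 ≠ ⟨j, hj⟩ := fun h => by
    have := i.2
    rw [h] at this
    exact absurd this (by simp)
  change (gen ⟨j, hj⟩).toAdd i.1 + x _ = x _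
  rw [gen_toAdd, if_neg hi, zero_add]

/-- The exact sequence `0 → ℤ[Tail r j] → ℤ[Tail r j] → ℤ[Tail r (j + 1)] → 0` whose first map is
`e_j - 1`. -/
lemma tail_shortExact (j : ℕ) (hj : j < r) :
    (ShortComplex.mk _ _ (permDiff_comp_permMap (gen ⟨j, hj⟩) (Tail.restrict r j)
      (fun _ _ => rfl) (Tail.restrict_gen_smul j hj))).ShortExact := by
  refine perm_shortExact _ _ _ (Tail.restrict_gen_smul j hj) (Tail.extend r j) (fun y => ?_) (fun x => ?_) fun x n h => ?_
  · funext i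
    exact dif_pos i.2
  · refine ⟨x ⟨⟨j, hj⟩, le_rfl⟩, funext fun i => ?_⟩
    rw [Tail.smul_apply, gen_zpow_toAdd]
    by_cases h : i.1 = ⟨j, hj⟩
    · obtain ⟨i, hi⟩ := i
      subst h
      simp [Tail.extend]
    · have hi : j + 1 ≤ i.1.1 := by
        have := i.2
        have : i.1.1 ≠ j := fun h' => h (Fin.ext h')
        omega
      simp [Tail.extend, Tail.restrict, h, hi]
  · have := congrFun h ⟨⟨j, hj⟩, le_rfl⟩
    rw [Tail.smul_apply, gen_zpow_toAdd] at this
    simpa using this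

lemma permMap_isIso {G X Y : Type} [CommGroup G] [MulAction G X] [MulAction G Y] (e : X ≃ Y)
    (he : ∀ (g : G) x, e (g • x) = g • e x) : IsIso (permMap e he) := by
  have he' : ∀ (g : G) y, e.symm (g • y) = g • e.symm y := fun g y => by
    rw [e.symm_apply_eq, he, e.apply_symm_apply]
  refine ⟨permMap e.symm he', ?_, ?_⟩ <;>
  · apply Rep.hom_ext
    apply Representation.IntertwiningMap.ext
    apply MonoidAlgebra.lhom_ext'
    intro x
    apply LinearMap.ext_ring
    simp [permMap]

/-- `ℤ[Tail r 0]` is the regular representation. -/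
instance tail_zero_projective :
    Projective (Rep.ofMulAction ℤ (Multiplicative (Fin r → ℤ)) (Tail r 0)) := by
  let e : Multiplicative (Fin r → ℤ) ≃ Tail r 0 :=
    { toFun := fun g i => g.toAdd i
      invFun := fun x => .ofAdd fun i => x ⟨i, Nat.zero_le _⟩
      left_inv := fun _ => rfl
      right_inv := fun _ => rfl }
  have := permMap_isIso (G := Multiplicative (Fin r → ℤ)) e fun _ _ => rfl
  exact Projective.of_iso (asIso (permMap (G := Multiplicative (Fin r → ℤ)) e fun _ _ => rfl))
    (Rep.leftRegular_projective)

instance : Subsingleton (Tail r r) where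
  allEq _ _ := funext fun i => absurd i.2 (by simp)

/-- `Tail r r` is a point, so its permutation module is the trivial representation. -/
noncomputable def tailIsoTrivial : Rep.ofMulAction ℤ (Multiplicative (Fin r → ℤ)) (Tail r r) ≅
    Rep.trivial ℤ _ ℤ :=
  Rep.mkIso (.mk ((MonoidAlgebra.coeffLinearEquiv ℤ).trans
    (Finsupp.uniqueLinearEquiv ℤ ℤ (0 : Tail r r))) fun g ↦ by
      ext x; simp [Subsingleton.elim (g • x) x])

/-- If `e_0 - 1` is surjective on a `ℤ^r`-module `M`, then `H^i(ℤ^r, M) = 0` for `i ≥ r`. -/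
theorem groupCohomology_subsingleton (hr : 0 < r) (M : Rep.{0} ℤ (Multiplicative (Fin r → ℤ)))
    (hM : ∀ m : M, ∃ m', M.ρ (gen ⟨0, hr⟩) m' - m' = m) (i : ℕ) (hi : r ≤ i) :
    Subsingleton (groupCohomology M i) := by
  have : HasExt.{0} (Rep.{0} ℤ (Multiplicative (Fin r → ℤ))) := hasExt_of_enoughProjectives _
  have hproj : ∀ n, Subsingleton (Ext (Rep.ofMulAction ℤ _ (Tail r 0)) M (n + 1)) := fun n =>
    subsingleton_of_forall_eq 0 Ext.eq_zero_of_projective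
  have key : ∀ j, j + 1 ≤ r → ∀ n, j + 1 ≤ n →
      Subsingleton (Ext (Rep.ofMulAction ℤ _ (Tail r (j + 1))) M n) := by
    intro j
    induction j with
    | zero =>
      intro hj n hn
      obtain ⟨n, rfl⟩ := Nat.exists_eq_add_of_le' hn
      cases n with
      | zero =>
        refine ext_one_subsingleton (tail_shortExact 0 hr) M (fun φ => ?_) (hproj 0)
        -- A map out of the projective `ℤ[Tail r 0]` lifts through `e_0 - 1 : M → M`, and lifts commute
        -- with `e_0 - 1`.
        have : Epi (Rep.applyAsHom M (gen ⟨0, hr⟩) - 𝟙 M) := (Rep.epi_iff_surjective _).2 hM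
        refine ⟨Projective.factorThru (P := Rep.ofMulAction ℤ _ (Tail r 0)) φ
          (Rep.applyAsHom M (gen ⟨0, hr⟩) - 𝟙 M), ?_⟩
        change (Rep.applyAsHom _ _ - 𝟙 _) ≫ _ = _
        rw [Preadditive.sub_comp, Rep.applyAsHom_comm, Category.id_comp]
        conv_rhs => rw [← Projective.factorThru_comp φ (Rep.applyAsHom M (gen ⟨0, hr⟩) - 𝟙 M)]
        rw [Preadditive.comp_sub, Category.comp_id]
      | succ n => exact ext_subsingleton_step (tail_shortExact 0 hr) M _ (hproj n) (hproj _)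
    | succ j ih =>
      intro hj n hn
      obtain ⟨n, rfl⟩ := Nat.exists_eq_add_of_le' (show 1 ≤ n by omega)
      exact ext_subsingleton_step (tail_shortExact (j + 1) hj) M n (ih (by omega) n (by omega))
        (ih (by omega) _ (by omega))
  refine groupCohomology_subsingleton_of_ext M i (by omega) ?_
  obtain ⟨j, rfl⟩ := Nat.exists_eq_add_of_le' hr
  have h := key j le_rfl i hi
  refine subsingleton_of_forall_eq 0 fun x => ?_
  have h0 : (Ext.mk₀ tailIsoTrivial.hom).comp x (zero_add i) = 0 := Subsingleton.elim _ _
  have h1 : (Ext.mk₀ tailIsoTrivial.inv).comp ((Ext.mk₀ tailIsoTrivial.hom).comp x (zero_add i))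
      (zero_add i) = x := by simp
  rw [← h1, h0, Ext.comp_zero]
end Tail

/-- The operator `f ↦ f(z + c) / f(z)` is surjective on `O(ℂ)^×`. -/
lemma EntireUnits.exists_translate_div {c : ℂ} (hc : c ≠ 0) (f : EntireUnits) :
    ∃ u : EntireUnits, EntireUnits.translate c u / u = f := by
  obtain ⟨h, hh, hf⟩ := exists_entire_unit_quotient f.2.1 f.2.2 hc
  refine ⟨⟨fun z => exp (h z), hh.cexp, fun z => exp_ne_zero _⟩, ?_⟩
  exact Subtype.ext (funext fun z => (div_eq_mul_inv _ _).symm.trans (hf z))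

/-- If the values `x_j = ι(e_j)` are ℚ-linearly independent and span `ℂ` over `ℝ`, then
`H^i(ℤ^r, O(ℂ)^×) = 0` for all `i ≥ r`. -/
theorem entireCohomology_subsingleton_of_ge (r : ℕ) (hr : 1 ≤ r) (ι : (Fin r → ℤ) →+ ℂ)
    (hind : LinearIndependent ℚ fun j : Fin r => ι (Pi.single j 1))
    (hspan : Submodule.span ℝ (Set.range fun j : Fin r => ι (Pi.single j 1)) = ⊤)
    (i : ℕ) (hi : r ≤ i) :
    Subsingleton (entireCohomology r ι i) := by
  have hc : ι (Pi.single ⟨0, hr⟩ 1) ≠ 0 := hind.ne_zero ⟨0, hr⟩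
  refine groupCohomology_subsingleton hr (Rep.of (entireRep r ι)) (fun m => ?_) i hi
  exact EntireUnits.exists_translate_div hc m
end
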